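/- Let 0 < ε < 1, let q : ℂ → ℂ be compactly supported and Hölder continuous with exponent ε, fix 2 < r < ∞ and k ∈ ℂ. Suppose m₁₁, m₂₁ : ℂ → ℂ are real-differentiable, satisfy ∂̄m₁₁ = q·m₂₁ and ∂m₂₁ + i·k·m₂₁ = conj(q)·m₁₁ on ℂ, with m₁₁ − 1 and m₂₁ in L^r(ℂ) and Hölder continuous with exponent ε; and suppose n₁₂, n₂₂ : ℂ → ℂ are real-differentiable, satisfy ∂̄n₁₂ − i·conj(k)·n₁₂ = q·n₂₂ and ∂n₂₂ = conj(q)·n₁₂ on ℂ, with n₂₂ − 1 and n₁₂ in L^r(ℂ) and Hölder continuous with exponent ε. Then for all z ∈ ℂ one has the symmetry relations m₁₁(z) = conj(n₂₂(z)) and m₂₁(z) = conj(n₁₂(z)). -/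

import Mathlib

open MeasureTheory Complex

/-- Wirtinger derivative `∂f = (∂ₓf − i∂_yf)/2` of `f : ℂ → ℂ`. -/
noncomputable def wD (f : ℂ → ℂ) (z : ℂ) : ℂ :=
  (fderiv ℝ f z 1 - Complex.I * fderiv ℝ f z Complex.I) / 2

/-- Wirtinger derivative `∂̄f = (∂ₓf + i∂_yf)/2` of `f : ℂ → ℂ`. -/
noncomputable def wDbar (f : ℂ → ℂ) (z : ℂ) : ℂ :=
  (fderiv ℝ f z 1 + Complex.I * fderiv ℝ f z Complex.I) / 2

/-- `f` is Hölder continuous with exponent `ε`. -/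
def IsHolder (ε : ℝ) (f : ℂ → ℂ) : Prop :=
  ∃ C ≥ (0 : ℝ), ∀ z z' : ℂ, ‖f z - f z'‖ ≤ C * ‖z - z'‖ ^ ε

section Helpers

open Filter Topology Set

lemma fderiv_wirtinger (h : ℂ → ℂ) (z v : ℂ) :
    fderiv ℝ h z v = wD h z * v + wDbar h z * (starRingEnd ℂ) v := by
  have hv : v = v.re • (1:ℂ) + v.im • Complex.I := by
    apply Complex.ext <;> simp
  have h1 : fderiv ℝ h z v = v.re * fderiv ℝ h z 1 + v.im * fderiv ℝ h z Complex.I := by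
    conv_lhs => rw [hv]
    rw [map_add, map_smul, map_smul]
    simp
  have h2 : (starRingEnd ℂ) v = v.re - v.im * Complex.I := by
    apply Complex.ext <;> simp
  have h3 : v = v.re + v.im * Complex.I := (Complex.re_add_im v).symm
  rw [h1, h2]
  unfold wD wDbar
  conv_rhs => rw [h3]
  simp only [Complex.add_re, Complex.ofReal_re, Complex.mul_re, Complex.I_re, Complex.add_im, Complex.ofReal_im, Complex.mul_im, Complex.I_im]
  ring_nf
  simp only [Complex.I_sq]
  ring

lemma annulus (h F : ℂ → ℂ) (hd : Differentiable ℝ h) (hF : ∀ z, wDbar h z = F z)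
    (Fc : Continuous F) (z : ℂ) (a b : ℝ) (ha : 0 < a) (hb : 0 < b) :
    ∫ ρ in a..b, ∫ θ in (-Real.pi)..Real.pi,
      Complex.exp (-(θ * Complex.I)) * F (z - ρ * Complex.exp (θ * Complex.I)) =
    (1/2) * ((∫ θ in (-Real.pi)..Real.pi, h (z - a * Complex.exp (θ * Complex.I)))
      - ∫ θ in (-Real.pi)..Real.pi, h (z - b * Complex.exp (θ * Complex.I))) := by
  let f : ℝ × ℝ → ℂ := fun x => h (z - x.1 * Complex.exp (x.2 * Complex.I))
  let g : ℝ × ℝ → ℂ := fun x => (Complex.I * (x.1 : ℂ)⁻¹) * f x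
  have hP : Differentiable ℝ (fun x : ℝ × ℝ => z - (x.1:ℂ) * Complex.exp (x.2 * Complex.I)) := by
    have h1 : Differentiable ℝ (fun x : ℝ × ℝ => (x.1:ℂ)) :=
      Complex.ofRealCLM.differentiable.comp differentiable_fst
    have h2 : Differentiable ℝ (fun x : ℝ × ℝ => (x.2:ℂ)) :=
      Complex.ofRealCLM.differentiable.comp differentiable_snd
    fun_prop
  have hf : Differentiable ℝ f := hd.comp hP
  have hg : ∀ x : ℝ × ℝ, 0 < x.1 → DifferentiableAt ℝ g x := by
    intro x hx
    have h1 : Differentiable ℝ (fun x : ℝ × ℝ => (x.1:ℂ)) :=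
      Complex.ofRealCLM.differentiable.comp differentiable_fst
    have h2 : DifferentiableAt ℝ (fun x : ℝ × ℝ => (x.1:ℂ)⁻¹) x := by
      refine (h1 x).inv ?_
      exact_mod_cast hx.ne'
    exact (h2.const_mul Complex.I).mul (hf x)
  have hpos : ∀ x : ℝ × ℝ, x ∈ uIcc a b ×ˢ uIcc (-Real.pi) Real.pi → 0 < x.1 := by
    intro x hx
    have := hx.1.1
    exact lt_of_lt_of_le (lt_min ha hb) this
  have key : ∀ x : ℝ × ℝ, 0 < x.1 → fderiv ℝ f x (1, 0) + fderiv ℝ g x (0, 1) =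
      (-2) * (Complex.exp (-(x.2 * Complex.I)) * F (z - x.1 * Complex.exp (x.2 * Complex.I))) := by
    rintro ⟨ρ, θ⟩ hx
    have hx' : (ρ:ℂ) ≠ 0 := by exact_mod_cast (show 0 < ρ from hx).ne'
    set w := z - ρ * Complex.exp (θ * Complex.I) with hw
    have e1 : HasDerivAt (fun t : ℝ => f (t, θ)) (fderiv ℝ h w (-(Complex.exp (θ * Complex.I)))) ρ := by
      have : HasDerivAt (fun t : ℝ => z - t * Complex.exp (θ * Complex.I))
          (-(Complex.exp (θ * Complex.I))) ρ := by
        have h0 := ((Complex.ofRealCLM.hasDerivAt (x := ρ)).mul_const (Complex.exp (θ * Complex.I))).const_sub z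
        simpa using h0
      exact (hd w).hasFDerivAt.comp_hasDerivAt ρ this
    have e2 : HasDerivAt (fun t : ℝ => f (ρ, t))
        (fderiv ℝ h w (-(ρ * (Complex.exp (θ * Complex.I) * Complex.I)))) θ := by
      have : HasDerivAt (fun t : ℝ => z - ρ * Complex.exp (t * Complex.I))
          (-(ρ * (Complex.exp (θ * Complex.I) * Complex.I))) θ := by
        have h0 := (((((Complex.ofRealCLM.hasDerivAt (x := θ)).mul_const Complex.I).cexp).const_mul (ρ:ℂ))).const_sub z
        simpa using h0
      exact (hd w).hasFDerivAt.comp_hasDerivAt θ this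
    have e3 := e2.const_mul (Complex.I * (ρ:ℂ)⁻¹)
    have d1 : HasDerivAt (fun t : ℝ => f (t, θ)) (fderiv ℝ f (ρ, θ) (1, 0)) ρ :=
      HasFDerivAt.comp_hasDerivAt (l := f) (f := fun t : ℝ => (t, θ)) ρ (hf (ρ, θ)).hasFDerivAt ((hasDerivAt_id ρ).prodMk (hasDerivAt_const ρ θ))
    have d2 : HasDerivAt (fun t : ℝ => g (ρ, t)) (fderiv ℝ g (ρ, θ) (0, 1)) θ :=
      HasFDerivAt.comp_hasDerivAt (l := g) (f := fun t : ℝ => (ρ, t)) θ (hg (ρ, θ) hx).hasFDerivAt ((hasDerivAt_const θ ρ).prodMk (hasDerivAt_id θ))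
    rw [d1.unique e1, d2.unique e3, fderiv_wirtinger, fderiv_wirtinger, hF]
    have hc : (starRingEnd ℂ) (Complex.exp (θ * Complex.I)) = Complex.exp (-(θ * Complex.I)) := by
      rw [← Complex.exp_conj]; simp
    simp only [map_neg, map_mul, hc, Complex.conj_ofReal, Complex.conj_I]
    field_simp
    simp only [Complex.I_sq]
    ring
  have cont : Continuous (fun x : ℝ × ℝ => (-2:ℂ) * (Complex.exp (-(x.2 * Complex.I)) * F (z - x.1 * Complex.exp (x.2 * Complex.I)))) := by
    fun_prop
  have main := MeasureTheory.integral2_divergence_prod_of_hasFDerivAt_off_countable f g (fderiv ℝ f) (fderiv ℝ g)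
    a (-Real.pi) b Real.pi ∅ countable_empty hf.continuous.continuousOn
    (fun x hx => (hg x (hpos x hx)).continuousAt.continuousWithinAt)
    (fun x _ => (hf x).hasFDerivAt)
    (fun x hx => (hg x (lt_trans (lt_min ha hb) hx.1.1.1)).hasFDerivAt)
    (by
      refine IntegrableOn.congr_fun (f := fun x : ℝ × ℝ => (-2:ℂ) * (Complex.exp (-(x.2 * Complex.I)) * F (z - x.1 * Complex.exp (x.2 * Complex.I)))) ?_ (fun x hx => (key x (hpos x hx)).symm) ?_
      · exact cont.continuousOn.integrableOn_compact (isCompact_uIcc.prod isCompact_uIcc)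
      · exact (measurableSet_uIcc.prod measurableSet_uIcc))
  have hper : ∀ x : ℝ, g (x, Real.pi) = g (x, -Real.pi) := by
    intro x
    simp only [g, f]
    have : Complex.exp (((-Real.pi : ℝ):ℂ) * Complex.I) = Complex.exp ((Real.pi : ℂ) * Complex.I) := by
      rw [Complex.exp_pi_mul_I]
      push_cast
      rw [neg_mul, Complex.exp_neg, Complex.exp_pi_mul_I]; norm_num
    rw [this]
  simp only [hper, sub_self, zero_add] at main
  have h2 : ∫ x in a..b, ∫ y in (-Real.pi)..Real.pi, fderiv ℝ f (x, y) (1, 0) + fderiv ℝ g (x, y) (0, 1)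
     = ∫ x in a..b, (-2:ℂ) * ∫ θ in (-Real.pi)..Real.pi,
      Complex.exp (-(θ * Complex.I)) * F (z - x * Complex.exp (θ * Complex.I)) := by
    apply intervalIntegral.integral_congr
    intro x hx
    have hx0 : 0 < x := lt_of_lt_of_le (lt_min ha hb) hx.1
    simp only
    rw [← intervalIntegral.integral_const_mul]
    apply intervalIntegral.integral_congr
    intro y hy
    exact key (x, y) hx0
  rw [h2, intervalIntegral.integral_const_mul] at main
  simp only [f] at main
  linear_combination (-1/2) * main

lemma pompeiu (h F : ℂ → ℂ) (hd : Differentiable ℝ h) (hF : ∀ z, wDbar h z = F z)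
    (Fc : Continuous F) (Fs : HasCompactSupport F) (h0 : Tendsto h (cocompact ℂ) (𝓝 0)) (z : ℂ) :
    ∫ w, w⁻¹ * F (z - w) = Real.pi * h z := by
  obtain ⟨R1, hR1⟩ := Fs.isCompact.isBounded.subset_closedBall 0
  have hFz : ∀ w : ℂ, R1 < ‖w‖ → F w = 0 := by
    intro w hw
    by_contra hne
    have := hR1 (subset_tsupport F hne)
    simp at this
    linarith
  set R : ℝ := |R1| + ‖z‖ + 1 with hR
  have hRpos : 0 < R := by positivity
  let I : ℝ → ℂ := fun ρ => ∫ θ in (-Real.pi)..Real.pi,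
      Complex.exp (-(θ * Complex.I)) * F (z - ρ * Complex.exp (θ * Complex.I))
  let A : ℝ → ℂ := fun ρ => ∫ θ in (-Real.pi)..Real.pi, h (z - ρ * Complex.exp (θ * Complex.I))
  have hnorm : ∀ ρ θ : ℝ, 0 ≤ ρ → ρ - ‖z‖ ≤ ‖z - ρ * Complex.exp (θ * Complex.I)‖ := by
    intro ρ θ hρ
    have h1 : ‖(ρ:ℂ) * Complex.exp (θ * Complex.I)‖ = ρ := by
      rw [norm_mul, Complex.norm_exp_ofReal_mul_I, Complex.norm_real, Real.norm_of_nonneg hρ, mul_one]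
    have := norm_sub_norm_le ((ρ:ℂ) * Complex.exp (θ * Complex.I)) z
    rw [h1, norm_sub_rev] at this
    exact this
  have hKz : ∀ ρ θ : ℝ, R ≤ ρ → F (z - ρ * Complex.exp (θ * Complex.I)) = 0 := by
    intro ρ θ hρ
    apply hFz
    have := hnorm ρ θ (by linarith)
    have := le_abs_self R1
    linarith
  have hc := hd.continuous
  have Ic : Continuous I := by
    apply intervalIntegral.continuous_parametric_intervalIntegral_of_continuous'
    simp only [Function.uncurry_def]
    fun_prop
  have Ac : Continuous A := by
    apply intervalIntegral.continuous_parametric_intervalIntegral_of_continuous'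
    simp only [Function.uncurry_def]
    fun_prop
  have hA0 : A 0 = 2 * Real.pi * h z := by
    simp [A]
    left
    ring
  have hann : ∀ b : ℝ, 0 < b → ∫ ρ in (0:ℝ)..b, I ρ = (1/2) * (A 0 - A b) := by
    intro b hb
    have c1 : Continuous (fun a : ℝ => ∫ ρ in a..b, I ρ) := by
      have : (fun a : ℝ => ∫ ρ in a..b, I ρ) = fun a => - ∫ ρ in b..a, I ρ := by
        ext a; exact intervalIntegral.integral_symm _ _
      rw [this]
      exact (intervalIntegral.continuous_primitive (fun a b => Ic.intervalIntegrable a b) b).neg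
    have c2 : Continuous (fun a : ℝ => (1/2) * (A a - A b)) := by fun_prop
    have t1 : Tendsto (fun a : ℝ => ∫ ρ in a..b, I ρ) (𝓝[>] 0) (𝓝 (∫ ρ in (0:ℝ)..b, I ρ)) :=
      (c1.tendsto 0).mono_left nhdsWithin_le_nhds
    have t2 : Tendsto (fun a : ℝ => (1/2) * (A a - A b)) (𝓝[>] 0) (𝓝 ((1/2) * (A 0 - A b))) :=
      (c2.tendsto 0).mono_left nhdsWithin_le_nhds
    refine tendsto_nhds_unique (t1.congr' ?_) t2
    filter_upwards [self_mem_nhdsWithin] with a ha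
    exact annulus h F hd hF Fc z a b ha hb
  have hIz : ∀ ρ, R ≤ ρ → I ρ = 0 := by
    intro ρ hρ
    simp only [I, hKz ρ _ hρ]
    simp
  have hIb : ∀ b, R ≤ b → ∫ ρ in (0:ℝ)..b, I ρ = ∫ ρ in (0:ℝ)..R, I ρ := by
    intro b hb
    rw [← intervalIntegral.integral_add_adjacent_intervals (Ic.intervalIntegrable 0 R)
      (Ic.intervalIntegrable R b)]
    have : ∫ ρ in R..b, I ρ = ∫ ρ in R..b, (0:ℂ) := by
      apply intervalIntegral.integral_congr
      intro ρ hρ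
      rw [uIcc_of_le hb] at hρ
      exact hIz ρ hρ.1
    rw [this]; simp
  have hI : ∫ ρ in (0:ℝ)..R, I ρ = Real.pi * h z := by
    have hpi := Real.pi_pos
    rw [← sub_eq_zero, ← norm_le_zero_iff]
    apply le_of_forall_pos_le_add
    intro e he
    have hev : ∀ᶠ w in cocompact ℂ, ‖h w‖ < e / Real.pi := by
      have := h0.norm
      rw [norm_zero] at this
      exact this.eventually (gt_mem_nhds (by positivity))
    rw [← Metric.cobounded_eq_cocompact] at hev
    rw [← comap_norm_atTop, eventually_comap] at hev
    obtain ⟨r, hr⟩ := eventually_atTop.1 hev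
    set b := max R (|r| + ‖z‖ + 1)
    have hbR : R ≤ b := le_max_left _ _
    have hbr : |r| + ‖z‖ + 1 ≤ b := le_max_right _ _
    have hAb : ‖A b‖ ≤ (e / Real.pi) * |Real.pi - (-Real.pi)| := by
      apply intervalIntegral.norm_integral_le_of_norm_le_const
      intro θ _
      refine (hr _ ?_ _ rfl).le
      have := hnorm b θ (by linarith)
      have := le_abs_self r
      linarith
    have e1 := hann b (by linarith)
    rw [hIb b hbR, hA0] at e1
    have : (∫ ρ in (0:ℝ)..R, I ρ) - Real.pi * h z = -(1/2) * A b := by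
      rw [e1]; ring
    rw [this, norm_mul]
    rw [show |Real.pi - (-Real.pi)| = 2 * Real.pi by rw [abs_of_pos] <;> linarith] at hAb
    have : e / Real.pi * (2 * Real.pi) = 2 * e := by field_simp
    rw [this] at hAb
    have : ‖(-(1/2) : ℂ)‖ = 1/2 := by norm_num
    rw [this]
    linarith
  rw [← hI, ← Complex.integral_comp_polarCoord_symm]
  let K : ℝ × ℝ → ℂ := fun p => Complex.exp (-(p.2 * Complex.I)) * F (z - p.1 * Complex.exp (p.2 * Complex.I))
  have Kc : Continuous K := by fun_prop
  have s1 : ∫ p in polarCoord.target, p.1 • ((Complex.polarCoord.symm p)⁻¹ * F (z - Complex.polarCoord.symm p))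
      = ∫ p in Ioi (0:ℝ) ×ˢ Ioo (-Real.pi) Real.pi, K p := by
    apply setIntegral_congr_fun (measurableSet_Ioi.prod measurableSet_Ioo)
    rintro ⟨ρ, θ⟩ hp
    have hρ : (ρ:ℂ) ≠ 0 := by exact_mod_cast (show 0 < ρ from hp.1).ne'
    have he : Complex.polarCoord.symm (ρ, θ) = ρ * Complex.exp (θ * Complex.I) := by
      rw [Complex.polarCoord_symm_apply, Complex.exp_mul_I]
      simp
    simp only [he, K]
    rw [Complex.exp_neg, Complex.real_smul, mul_inv]
    field_simp
  have s2 : ∫ p in Ioi (0:ℝ) ×ˢ Ioo (-Real.pi) Real.pi, K p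
      = ∫ p in Ioc (0:ℝ) R ×ˢ Ioo (-Real.pi) Real.pi, K p := by
    refine setIntegral_eq_of_subset_of_forall_sdiff_eq_zero (measurableSet_Ioi.prod measurableSet_Ioo) ?_ ?_
    · exact prod_mono Ioc_subset_Ioi_self le_rfl
    · rintro ⟨ρ, θ⟩ ⟨h1, h2⟩
      have : R ≤ ρ := by
        by_contra hlt
        exact h2 ⟨⟨h1.1, (not_le.1 hlt).le⟩, h1.2⟩
      simp only [K, hKz ρ θ this, mul_zero]
  have s3 : ∫ p in Ioc (0:ℝ) R ×ˢ Ioo (-Real.pi) Real.pi, K p = 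
      ∫ ρ in Ioc (0:ℝ) R, ∫ θ in Ioo (-Real.pi) Real.pi, K (ρ, θ) := by
    apply setIntegral_prod
    refine IntegrableOn.mono_set ?_ (prod_mono Ioc_subset_Icc_self Ioo_subset_Icc_self)
    exact Kc.continuousOn.integrableOn_compact (isCompact_Icc.prod isCompact_Icc)
  rw [s1, s2, s3, intervalIntegral.integral_of_le hRpos.le]
  congr 1
  ext ρ
  simp only [I]
  rw [intervalIntegral.integral_of_le (by linarith [Real.pi_pos]), integral_Ioc_eq_integral_Ioo]

lemma locInt_inv : LocallyIntegrable (fun w : ℂ => w⁻¹) := by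
  refine locallyIntegrable_of_norm_le_rpow (C := 1) (α := 1) (by simp) (by simp)
    (Eventually.of_forall fun w => ?_) measurable_inv.aestronglyMeasurable
  rw [Real.rpow_neg_one]; simp

lemma kernel_bound (R0 : ℝ) : ∃ C : ℝ, 0 ≤ C ∧ ∀ (F : ℂ → ℂ) (M : ℝ), (∀ z, ‖F z‖ ≤ M) →
    (∀ z, R0 < ‖z‖ → F z = 0) → ∀ z, ‖∫ w, w⁻¹ * F (z - w)‖ ≤ C * M := by
  have hi : IntegrableOn (fun w : ℂ => ‖w⁻¹‖) (Metric.closedBall 0 1) :=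
    (locInt_inv.integrableOn_isCompact (isCompact_closedBall 0 1)).norm
  refine ⟨(∫ w in Metric.closedBall (0:ℂ) 1, ‖w⁻¹‖) + volume.real (Metric.closedBall (0:ℂ) R0), ?_, ?_⟩
  · positivity
  intro F M hM hF z
  have hM0 : 0 ≤ M := (norm_nonneg _).trans (hM 0)
  have i1 : Integrable ((Metric.closedBall (0:ℂ) 1).indicator (fun w : ℂ => ‖w⁻¹‖)) :=
    hi.integrable_indicator Metric.isClosed_closedBall.measurableSet
  have i2 : Integrable ((Metric.closedBall z R0).indicator (fun _ : ℂ => (1:ℝ))) :=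
    IntegrableOn.integrable_indicator (by
      apply integrableOn_const
      · exact (isCompact_closedBall z R0).measure_lt_top.ne
      · simp) Metric.isClosed_closedBall.measurableSet
  have hv : volume.real (Metric.closedBall (0:ℂ) R0) = volume.real (Metric.closedBall z R0) := by
    simp only [Measure.real]
    rw [Measure.addHaar_closedBall_center volume z R0]
  calc ‖∫ w, w⁻¹ * F (z - w)‖ ≤ ∫ w, ((Metric.closedBall (0:ℂ) 1).indicator (fun w : ℂ => ‖w⁻¹‖) w + (Metric.closedBall z R0).indicator (fun _ : ℂ => (1:ℝ)) w) * M := by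
        apply norm_integral_le_of_norm_le ((i1.add i2).mul_const M)
        refine Eventually.of_forall fun w => ?_
        rw [norm_mul]
        by_cases hw : w ∈ Metric.closedBall z R0
        · refine mul_le_mul ?_ (hM _) (norm_nonneg _) ?_
          · show ‖w⁻¹‖ ≤ (Metric.closedBall (0:ℂ) 1).indicator (fun w : ℂ => ‖w⁻¹‖) w + (Metric.closedBall z R0).indicator (fun _ : ℂ => (1:ℝ)) w
            rw [indicator_of_mem hw]
            by_cases h1 : w ∈ Metric.closedBall (0:ℂ) 1
            · rw [indicator_of_mem h1]; linarith
            · rw [indicator_of_notMem h1]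
              have : 1 < ‖w‖ := by simpa using h1
              rw [norm_inv, zero_add]
              exact inv_le_one_of_one_le₀ this.le
          · exact add_nonneg (indicator_nonneg (fun _ _ => norm_nonneg _) _) (indicator_nonneg (fun _ _ => zero_le_one) _)
        · have : F (z - w) = 0 := by
            apply hF
            rw [Metric.mem_closedBall, dist_comm, dist_eq_norm] at hw
            exact not_le.1 hw
          rw [this, norm_zero, mul_zero]
          exact mul_nonneg (add_nonneg (indicator_nonneg (fun _ _ => norm_nonneg _) _) (indicator_nonneg (fun _ _ => zero_le_one) _)) hM0
    _ = _ := by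
        rw [integral_mul_const, integral_add i1 i2, integral_indicator Metric.isClosed_closedBall.measurableSet, integral_indicator Metric.isClosed_closedBall.measurableSet, hv]
        simp

lemma solve_dbar (G : ℂ → ℂ) (hG : ContDiff ℝ 1 G) (Gs : HasCompactSupport G) :
    Differentiable ℝ (fun z => (Real.pi : ℂ)⁻¹ * ∫ w, w⁻¹ * G (z - w)) ∧
    ∀ z, wDbar (fun z => (Real.pi : ℂ)⁻¹ * ∫ w, w⁻¹ * G (z - w)) z = G z := by
  have hD : ∀ z, HasFDerivAt (fun z => (Real.pi : ℂ)⁻¹ * ∫ w, w⁻¹ * G (z - w))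
      ((Real.pi : ℂ)⁻¹ • (convolution (fun w : ℂ => w⁻¹) (fderiv ℝ G) ((ContinuousLinearMap.mul ℝ ℂ).precompR ℂ) volume z)) z := by
    intro z
    exact (Gs.hasFDerivAt_convolution_right (ContinuousLinearMap.mul ℝ ℂ) locInt_inv hG z).const_mul _
  refine ⟨fun z => (hD z).differentiableAt, fun z => ?_⟩
  have hGd : Differentiable ℝ G := hG.differentiable one_ne_zero
  have cf : Continuous (fderiv ℝ G) := hG.continuous_fderiv one_ne_zero
  have cv : ∀ v : ℂ, Continuous (fun z => fderiv ℝ G z v) := fun v => by fun_prop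
  have sv : ∀ v : ℂ, HasCompactSupport (fun z => fderiv ℝ G z v) := fun v =>
    (Gs.fderiv ℝ).comp_left (g := fun A : ℂ →L[ℝ] ℂ => A v) (by simp)
  have ci : ∀ v : ℂ, Integrable (fun w : ℂ => w⁻¹ * fderiv ℝ G (z - w) v) := fun v =>
    ((sv v).convolutionExists_right (ContinuousLinearMap.mul ℝ ℂ) locInt_inv (cv v) z)
  have hap : ∀ v : ℂ, fderiv ℝ (fun z => (Real.pi : ℂ)⁻¹ * ∫ w, w⁻¹ * G (z - w)) z v =
      (Real.pi : ℂ)⁻¹ * ∫ w, w⁻¹ * fderiv ℝ G (z - w) v := by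
    intro v
    rw [(hD z).fderiv]
    rw [_root_.smul_apply, smul_eq_mul]
    rw [convolution_precompR_apply (ContinuousLinearMap.mul ℝ ℂ) locInt_inv (Gs.fderiv ℝ) cf z v]
    rfl
  have pm := pompeiu G (wDbar G) hGd (fun _ => rfl) ?_ ?_ ?_ z
  · unfold wDbar
    rw [hap, hap]
    have hpi : (Real.pi : ℂ) ≠ 0 := by exact_mod_cast Real.pi_ne_zero
    have : ∫ w, w⁻¹ * wDbar G (z - w) = (1/2) * ((∫ w, w⁻¹ * fderiv ℝ G (z - w) 1) + Complex.I * ∫ w, w⁻¹ * fderiv ℝ G (z - w) Complex.I) := by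
      rw [← integral_const_mul, ← integral_add (ci 1) ((ci Complex.I).const_mul _), ← integral_const_mul]
      congr 1
      ext w
      unfold wDbar
      ring
    rw [this] at pm
    have e2 : G z = (Real.pi : ℂ)⁻¹ * (Real.pi * G z) := by field_simp
    rw [e2, ← pm]
    ring
  · unfold wDbar
    have := cv 1
    have := cv Complex.I
    fun_prop
  · have := (Gs.fderiv ℝ).comp_left (g := fun A : ℂ →L[ℝ] ℂ => (A 1 + Complex.I * A Complex.I) / 2) (by simp)
    exact this
  · exact Gs.is_zero_at_infty

lemma wDbar_mul_exp (p s : ℂ → ℂ) (z : ℂ) (hp : DifferentiableAt ℝ p z)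
    (hs : DifferentiableAt ℝ s z) :
    wDbar (fun z => p z * Complex.exp (-(s z))) z =
      (wDbar p z - wDbar s z * p z) * Complex.exp (-(s z)) := by
  have h1 : HasFDerivAt (fun z => p z * Complex.exp (-(s z))) _ z :=
    hp.hasFDerivAt.mul (hs.hasFDerivAt.neg.cexp)
  unfold wDbar
  rw [h1.fderiv]
  simp
  ring

lemma vekua_liouville (p Q : ℂ → ℂ) (hp : Differentiable ℝ p) (hQ : Continuous Q)
    (Qs : HasCompactSupport Q) (hpQ : ∀ z, wDbar p z = Q z * (starRingEnd ℂ) (p z))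
    (h0 : Tendsto p (cocompact ℂ) (𝓝 0)) (z : ℂ) : p z = 0 := by
  have pc := hp.continuous
  obtain ⟨R0, hR0⟩ := Qs.isCompact.isBounded.subset_closedBall 0
  have hQz : ∀ w : ℂ, R0 < ‖w‖ → Q w = 0 := by
    intro w hw
    by_contra hne
    have := hR0 (subset_tsupport Q hne)
    simp at this
    linarith
  obtain ⟨C, hC0, hC⟩ := kernel_bound R0
  obtain ⟨M, hM⟩ := Qs.exists_bound_of_continuous hQ
  have hM0 : 0 ≤ M := (norm_nonneg _).trans (hM 0)
  obtain ⟨P, hP⟩ : ∃ P, ∀ z, ‖p z‖ ≤ P := by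
    let p0 : ZeroAtInftyContinuousMap ℂ ℂ := ⟨⟨p, pc⟩, h0⟩
    obtain ⟨P, hP⟩ := (ZeroAtInftyContinuousMap.isBounded_range p0).exists_norm_le
    exact ⟨P, fun z => hP _ ⟨z, rfl⟩⟩
  have hP0 : 0 ≤ P := (norm_nonneg _).trans (hP 0)
  have hpi := Real.pi_pos
  set B : ℝ := Real.pi⁻¹ * (C * (M + 1)) with hB
  have key : ∀ δ : ℝ, 0 < δ → δ ≤ 1 →
      ‖p z‖ ≤ δ * (Real.pi⁻¹ * C * (M + P) * Real.exp B * Real.exp B) := by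
    intro δ hδ hδ1
    have hden : ∀ w, 0 < ‖p w‖ ^ 2 + δ ^ 2 := fun w => by positivity
    let g : ℂ → ℂ := fun w => Q w * (starRingEnd ℂ) (p w) ^ 2 / ((‖p w‖ ^ 2 + δ ^ 2 : ℝ) : ℂ)
    have gc : Continuous g := by
      apply Continuous.div
      · have := Complex.continuous_conj.comp pc
        exact hQ.mul (this.pow 2)
      · fun_prop
      · intro w
        exact_mod_cast (hden w).ne'
    obtain ⟨G, hG, hGg, hGs⟩ := gc.exists_contDiff_approx (1 : ℕ∞) (ε := fun _ => δ) (by fun_prop) (fun _ => hδ)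
    have hG1 : ContDiff ℝ 1 G := hG
    have gM : ∀ w, ‖g w‖ ≤ M := by
      intro w
      simp only [g]
      rw [norm_div, norm_mul, norm_pow, Complex.norm_conj, Complex.norm_real, Real.norm_of_nonneg (hden w).le,
        div_le_iff₀ (hden w)]
      refine mul_le_mul (hM w) ?_ (by positivity) hM0
      nlinarith
    have GM : ∀ w, ‖G w‖ ≤ M + 1 := by
      intro w
      have h1 := (hGg w).le
      rw [dist_eq_norm] at h1
      have := norm_le_norm_add_norm_sub' (G w) (g w)
      have := gM w
      linarith
    have Gz : ∀ w, Q w = 0 → G w = 0 := by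
      intro w hw
      by_contra hne
      have : w ∈ Function.support g := hGs hne
      apply this
      simp [g, hw]
    have GS : HasCompactSupport G := Qs.mono (fun w hw hq => hw (Gz w hq))
    obtain ⟨sd, sw⟩ := solve_dbar G hG1 GS
    set s : ℂ → ℂ := fun z => (Real.pi : ℂ)⁻¹ * ∫ w, w⁻¹ * G (z - w) with hs
    have sB : ∀ w, ‖s w‖ ≤ B := by
      intro w
      simp only [hs, hB]
      rw [norm_mul, norm_inv, Complex.norm_real, Real.norm_of_nonneg hpi.le]
      gcongr
      exact hC G (M+1) GM (fun w hw => Gz w (hQz w hw)) w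
    have eB : ∀ w, ‖Complex.exp (-(s w))‖ ≤ Real.exp B := by
      intro w
      rw [Complex.norm_exp]
      gcongr
      refine (Complex.re_le_norm _).trans ?_
      rw [norm_neg]
      exact sB w
    have eB' : ∀ w, ‖Complex.exp (s w)‖ ≤ Real.exp B := by
      intro w
      rw [Complex.norm_exp]
      gcongr
      exact (Complex.re_le_norm _).trans (sB w)
    let F : ℂ → ℂ := fun w => (Q w * (starRingEnd ℂ) (p w) - G w * p w) * Complex.exp (-(s w))
    let h : ℂ → ℂ := fun w => p w * Complex.exp (-(s w))
    have sc := sd.continuous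
    have Gc := hG1.continuous
    have hF : ∀ w, wDbar h w = F w := by
      intro w
      simp only [h, F]
      rw [wDbar_mul_exp p s w (hp w) (sd w), hpQ, sw]
    have Fc : Continuous F := by
      have := Complex.continuous_conj.comp pc
      have h2 : Continuous (fun w => (starRingEnd ℂ) (p w)) := this
      fun_prop
    have Fz : ∀ w, Q w = 0 → F w = 0 := by
      intro w hw
      simp [F, hw, Gz w hw]
    have Fs : HasCompactSupport F := Qs.mono (fun w hw hq => hw (Fz w hq))
    have FM : ∀ w, ‖F w‖ ≤ δ * (M + P) * Real.exp B := by
      intro w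
      simp only [F]
      rw [norm_mul]
      refine mul_le_mul ?_ (eB w) (norm_nonneg _) (by positivity)
      have e1 : Q w * (starRingEnd ℂ) (p w) - G w * p w =
          Q w * (starRingEnd ℂ) (p w) * ((δ ^ 2 / (‖p w‖ ^ 2 + δ ^ 2) : ℝ) : ℂ) - (G w - g w) * p w := by
        have hne : ((‖p w‖ ^ 2 + δ ^ 2 : ℝ) : ℂ) ≠ 0 := by exact_mod_cast (hden w).ne'
        have hc : (starRingEnd ℂ) (p w) * p w = ((‖p w‖ ^ 2 : ℝ) : ℂ) := by
          rw [Complex.conj_mul']; push_cast; rfl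
        have : g w * p w = Q w * (starRingEnd ℂ) (p w) * (1 - ((δ ^ 2 / (‖p w‖ ^ 2 + δ ^ 2) : ℝ) : ℂ)) := by
          have h3 : (1 - ((δ ^ 2 / (‖p w‖ ^ 2 + δ ^ 2) : ℝ) : ℂ)) = ((‖p w‖ ^ 2 : ℝ) : ℂ) / ((‖p w‖ ^ 2 + δ ^ 2 : ℝ) : ℂ) := by
            rw [← Complex.ofReal_one, ← Complex.ofReal_sub, ← Complex.ofReal_div]
            congr 1
            have := (hden w).ne'
            field_simp
            ring
          rw [h3, ← hc]
          simp only [g]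
          ring
        linear_combination (-1 : ℂ) * this
      rw [e1]
      refine (norm_sub_le _ _).trans ?_
      have b1 : ‖Q w * (starRingEnd ℂ) (p w) * ((δ ^ 2 / (‖p w‖ ^ 2 + δ ^ 2) : ℝ) : ℂ)‖ ≤ M * δ := by
        rw [norm_mul, norm_mul, Complex.norm_conj, Complex.norm_real, Real.norm_of_nonneg (by positivity), mul_assoc]
        refine mul_le_mul (hM w) ?_ (by positivity) hM0
        rw [← mul_div_assoc, div_le_iff₀ (hden w)]
        nlinarith [sq_nonneg (‖p w‖ - δ), norm_nonneg (p w), mul_nonneg hδ.le (sq_nonneg (‖p w‖ - δ)), mul_nonneg hδ.le (mul_nonneg hδ.le (norm_nonneg (p w)))]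
      have b2 : ‖(G w - g w) * p w‖ ≤ δ * P := by
        rw [norm_mul]
        have := (hGg w).le
        rw [dist_eq_norm] at this
        exact mul_le_mul this (hP w) (norm_nonneg _) hδ.le
      linarith
    have hh0 : Tendsto h (cocompact ℂ) (𝓝 0) := by
      have : Tendsto (fun w => ‖p w‖ * Real.exp B) (cocompact ℂ) (𝓝 0) := by
        have := h0.norm.mul_const (Real.exp B)
        simpa using this
      refine squeeze_zero_norm (fun w => ?_) this
      simp only [h]
      rw [norm_mul]
      gcongr
      exact eB w
    have pm := pompeiu h F (by intro w; exact (hp w).mul (sd w).neg.cexp) hF Fc Fs hh0 z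
    have bd := hC F _ FM (fun w hw => Fz w (hQz w hw)) z
    rw [pm, norm_mul, Complex.norm_real, Real.norm_of_nonneg hpi.le] at bd
    have e1 : p z = h z * Complex.exp (s z) := by
      simp only [h]
      rw [mul_assoc, ← Complex.exp_add]; simp
    have hz : ‖h z‖ ≤ Real.pi⁻¹ * (C * (δ * (M + P) * Real.exp B)) := by
      rw [inv_mul_eq_div, le_div_iff₀ hpi]; linarith
    rw [e1, norm_mul]
    refine (mul_le_mul hz (eB' z) (norm_nonneg _) (by positivity)).trans (le_of_eq ?_)
    ring
  set D := Real.pi⁻¹ * C * (M + P) * Real.exp B * Real.exp B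
  rw [← norm_le_zero_iff]
  have t : Tendsto (fun δ : ℝ => δ * D) (𝓝[>] 0) (𝓝 0) := by
    have : Continuous (fun δ : ℝ => δ * D) := by fun_prop
    have := (this.tendsto 0).mono_left (nhdsWithin_le_nhds (s := Ioi 0))
    simpa using this
  refine ge_of_tendsto t ?_
  filter_upwards [Ioc_mem_nhdsGT (zero_lt_one)] with δ hδ
  exact key δ hδ.1 hδ.2

lemma holder_continuous (f : ℂ → ℂ) (ε : ℝ) (hε : 0 < ε) (hH : IsHolder ε f) : Continuous f := by
  obtain ⟨C, hC0, hC⟩ := hH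
  rw [continuous_iff_continuousAt]
  intro x
  rw [ContinuousAt, tendsto_iff_norm_sub_tendsto_zero]
  refine squeeze_zero (fun _ => norm_nonneg _) (fun y => hC y x) ?_
  have : ContinuousAt (fun y : ℂ => C * ‖y - x‖ ^ ε) x := by
    refine ContinuousAt.const_mul ?_ C
    exact (by fun_prop : ContinuousAt (fun y : ℂ => ‖y - x‖) x).rpow_const (Or.inr hε.le)
  have h2 := this.tendsto
  simpa [Real.zero_rpow hε.ne'] using h2

lemma decay (f : ℂ → ℂ) (ε r : ℝ) (hε : 0 < ε) (hr : 2 < r) (hf : MemLp f (ENNReal.ofReal r))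
    (hH : IsHolder ε f) : Tendsto f (cocompact ℂ) (𝓝 0) := by
  have hfc := holder_continuous f ε hε hH
  obtain ⟨C, hC0, hC⟩ := hH
  rw [tendsto_zero_iff_norm_tendsto_zero, Metric.tendsto_nhds]
  intro η hη
  -- a radius on which `f` varies by at most `η / 2`
  obtain ⟨c, hc, hcη⟩ : ∃ c : ℝ, 0 < c ∧ C * c ^ ε ≤ η / 2 := by
    have hcont : ContinuousAt (fun c : ℝ => C * c ^ ε) 0 :=
      (Real.continuousAt_rpow_const 0 ε (Or.inr hε.le)).const_mul C
    have h1 : Tendsto (fun c : ℝ => C * c ^ ε) (𝓝[>] 0) (𝓝 0) := by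
      have := hcont.tendsto.mono_left (nhdsWithin_le_nhds (s := Ioi 0))
      simpa [Real.zero_rpow hε.ne'] using this
    have h2 := h1.eventually (ge_mem_nhds (show (0:ℝ) < η / 2 by positivity))
    obtain ⟨c, h3, h4⟩ := (h2.and self_mem_nhdsWithin).exists
    exact ⟨c, h4, h3⟩
  have hfin := hf.meas_ge_lt_top (by simp; linarith) (by simp) (ε := ⟨η / 2, by positivity⟩)
    (by intro h; have := congrArg NNReal.toReal h; change η / 2 = 0 at this; linarith)
  set S : Set ℂ := {x | (⟨η / 2, by positivity⟩ : NNReal) ≤ ‖f x‖₊} with hS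
  have hSm : MeasurableSet S := (isClosed_le continuous_const hfc.nnnorm).measurableSet
  have htend : Tendsto (fun n : ℕ => volume (S \ Metric.closedBall 0 n)) atTop (𝓝 0) := by
    have := tendsto_measure_iInter_atTop (μ := volume) (s := fun n : ℕ => S \ Metric.closedBall (0:ℂ) n)
      (fun n => (hSm.diff Metric.isClosed_closedBall.measurableSet).nullMeasurableSet)
      (fun m n hmn => sdiff_subset_sdiff_right (Metric.closedBall_subset_closedBall (by exact_mod_cast hmn)))
      ⟨0, ((measure_mono sdiff_subset).trans_lt hfin).ne⟩
    have he : (⋂ n : ℕ, S \ Metric.closedBall (0:ℂ) n) = ∅ := ?_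
    · rw [he, measure_empty] at this
      exact this
    rw [eq_empty_iff_forall_notMem]
    intro x hx
    obtain ⟨n, hn⟩ := exists_nat_ge ‖x‖
    exact (mem_iInter.1 hx n).2 (by simpa using hn)
  have hpos : 0 < volume (Metric.ball (0:ℂ) c) := Metric.measure_ball_pos _ _ hc
  obtain ⟨n, hn⟩ := (htend.eventually (gt_mem_nhds hpos)).exists
  rw [← Metric.cobounded_eq_cocompact, ← comap_norm_atTop, eventually_comap]
  filter_upwards [eventually_ge_atTop (n + c)] with t ht z hz
  simp only [dist_zero_right, norm_norm]
  by_contra hcon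
  rw [not_lt] at hcon
  have hsub : Metric.ball z c ⊆ S \ Metric.closedBall 0 n := by
    intro w hw
    rw [Metric.mem_ball, dist_comm, dist_eq_norm] at hw
    constructor
    · show η / 2 ≤ ‖f w‖
      have h1 := hC z w
      have h2 : C * ‖z - w‖ ^ ε ≤ C * c ^ ε := by gcongr
      have := norm_le_norm_add_norm_sub' (f z) (f w)
      linarith
    · rw [mem_closedBall_zero_iff]
      have := norm_le_norm_add_norm_sub' z w
      intro h
      linarith
  have := measure_mono (μ := volume) hsub
  rw [Measure.addHaar_ball_center volume z c] at this
  exact absurd (this.trans_lt hn) (lt_irrefl _)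

lemma fderiv_conj (f : ℂ → ℂ) (z v : ℂ) (hf : DifferentiableAt ℝ f z) :
    fderiv ℝ (fun z => (starRingEnd ℂ) (f z)) z v = (starRingEnd ℂ) (fderiv ℝ f z v) := by
  have h := Complex.conjCLE.toContinuousLinearMap.hasFDerivAt.comp z hf.hasFDerivAt
  have h' : HasFDerivAt (fun z => (starRingEnd ℂ) (f z)) _ z := h
  rw [h'.fderiv]
  rfl

lemma diff_conj (f : ℂ → ℂ) (hf : Differentiable ℝ f) :
    Differentiable ℝ (fun z => (starRingEnd ℂ) (f z)) :=
  Complex.conjCLE.toContinuousLinearMap.differentiable.comp hf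

lemma wDbar_conj (f : ℂ → ℂ) (z : ℂ) (hf : DifferentiableAt ℝ f z) :
    wDbar (fun z => (starRingEnd ℂ) (f z)) z = (starRingEnd ℂ) (wD f z) := by
  unfold wDbar wD
  rw [fderiv_conj f z _ hf, fderiv_conj f z _ hf]
  have h2 : (starRingEnd ℂ) (2 : ℂ) = 2 := map_ofNat (starRingEnd ℂ) 2
  simp only [map_div₀, map_add, map_sub, map_mul, Complex.conj_I, h2]
  ring

lemma wD_conj (f : ℂ → ℂ) (z : ℂ) (hf : DifferentiableAt ℝ f z) :
    wD (fun z => (starRingEnd ℂ) (f z)) z = (starRingEnd ℂ) (wDbar f z) := by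
  unfold wDbar wD
  rw [fderiv_conj f z _ hf, fderiv_conj f z _ hf]
  have h2 : (starRingEnd ℂ) (2 : ℂ) = 2 := map_ofNat (starRingEnd ℂ) 2
  simp only [map_div₀, map_add, map_sub, map_mul, Complex.conj_I, h2]
  ring

lemma wDbar_sub (f g : ℂ → ℂ) (z : ℂ) (hf : DifferentiableAt ℝ f z) (hg : DifferentiableAt ℝ g z) :
    wDbar (fun z => f z - g z) z = wDbar f z - wDbar g z := by
  unfold wDbar
  rw [fderiv_fun_sub hf hg]
  simp; ring

lemma wDbar_add (f g : ℂ → ℂ) (z : ℂ) (hf : DifferentiableAt ℝ f z) (hg : DifferentiableAt ℝ g z) :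
    wDbar (fun z => f z + g z) z = wDbar f z + wDbar g z := by
  unfold wDbar
  rw [fderiv_fun_add hf hg]
  simp; ring

lemma wD_sub (f g : ℂ → ℂ) (z : ℂ) (hf : DifferentiableAt ℝ f z) (hg : DifferentiableAt ℝ g z) :
    wD (fun z => f z - g z) z = wD f z - wD g z := by
  unfold wD
  rw [fderiv_fun_sub hf hg]
  simp; ring

lemma wDbar_phase (k z : ℂ) :
    wDbar (fun z => Complex.I * (k * z + (starRingEnd ℂ) (k * z))) z
      = Complex.I * (starRingEnd ℂ) k := by
  have h1 : HasFDerivAt (fun z : ℂ => k * z) (k • ContinuousLinearMap.id ℝ ℂ) z :=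
    (hasFDerivAt_id z).const_mul k
  have h2 : HasFDerivAt (fun z => (starRingEnd ℂ) (k * z)) _ z :=
    Complex.conjCLE.toContinuousLinearMap.hasFDerivAt.comp z h1
  have h3 : HasFDerivAt (fun z => Complex.I * (k * z + (starRingEnd ℂ) (k * z))) _ z :=
    (h1.add h2).const_mul Complex.I
  unfold wDbar
  rw [h3.fderiv]
  simp
  ring_nf
  simp
  ring

/-- Uniqueness for the homogeneous system. -/
lemma system_unique (q u v : ℂ → ℂ) (k : ℂ) (qc : Continuous q) (qs : HasCompactSupport q)
    (ud : Differentiable ℝ u) (vd : Differentiable ℝ v)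
    (h1 : ∀ z, wDbar u z = q z * v z)
    (h2 : ∀ z, wD v z + Complex.I * k * v z = (starRingEnd ℂ) (q z) * u z)
    (u0 : Tendsto u (cocompact ℂ) (𝓝 0)) (v0 : Tendsto v (cocompact ℂ) (𝓝 0)) (z : ℂ) :
    u z = 0 ∧ v z = 0 := by
  let s : ℂ → ℂ := fun z => Complex.I * (k * z + (starRingEnd ℂ) (k * z))
  have sd : Differentiable ℝ s := by
    have h1 : Differentiable ℝ (fun z : ℂ => k * z) := differentiable_id.const_mul k
    exact (h1.add (diff_conj _ h1)).const_mul _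
  have hE : ∀ z, Complex.exp (-(s z)) * (starRingEnd ℂ) (Complex.exp (-(s z))) = 1 := by
    intro z
    rw [← Complex.exp_conj, ← Complex.exp_add]
    simp only [s, map_neg, map_mul, map_add, Complex.conj_I, Complex.conj_conj]
    rw [← Complex.exp_zero]
    congr 1
    ring
  have hEn : ∀ z, ‖Complex.exp (-(s z))‖ = 1 := by
    intro z
    have := congrArg norm (hE z)
    rw [norm_mul, Complex.norm_conj, norm_one] at this
    nlinarith [norm_nonneg (Complex.exp (-(s z)))]
  let W : ℂ → ℂ := fun z => (starRingEnd ℂ) (v z) * Complex.exp (-(s z))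
  let Q : ℂ → ℂ := fun z => q z * Complex.exp (-(s z))
  have Wd : Differentiable ℝ W := fun w => (diff_conj v vd w).mul (sd w).neg.cexp
  have hW : ∀ z, wDbar W z = Q z * (starRingEnd ℂ) (u z) := by
    intro z
    simp only [W, Q]
    rw [wDbar_mul_exp _ s z (diff_conj v vd z) (sd z), wDbar_conj v z (vd z)]
    rw [show wDbar s z = Complex.I * (starRingEnd ℂ) k from wDbar_phase k z]
    have h3 : wD v z = (starRingEnd ℂ) (q z) * u z - Complex.I * k * v z := by
      rw [← h2 z]; ring
    rw [h3]
    simp only [map_sub, map_mul, Complex.conj_I, Complex.conj_conj]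
    ring
  have hu : ∀ z, wDbar u z = Q z * (starRingEnd ℂ) (W z) := by
    intro z
    rw [h1]
    simp only [Q, W, map_mul, Complex.conj_conj]
    linear_combination (-(q z * v z)) * hE z
  have Qc : Continuous Q := by
    have := sd.continuous
    fun_prop
  have Qs : HasCompactSupport Q := qs.mul_right
  have W0 : Tendsto W (cocompact ℂ) (𝓝 0) := by
    rw [tendsto_zero_iff_norm_tendsto_zero] at v0 ⊢
    refine v0.congr fun w => ?_
    simp only [W]
    rw [norm_mul, hEn, Complex.norm_conj, mul_one]
  have p1 := vekua_liouville (fun z => u z + W z) Q (ud.add Wd) Qc Qs (by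
    intro z
    rw [wDbar_add u W z (ud z) (Wd z), hu, hW]
    simp only [map_add]; ring) (by simpa using u0.add W0) z
  have p2 := vekua_liouville (fun z => u z - W z) (fun z => -Q z) (ud.sub Wd) Qc.neg Qs.neg (by
    intro z
    rw [wDbar_sub u W z (ud z) (Wd z), hu, hW]
    simp only [map_sub]; ring) (by simpa using u0.sub W0) z
  have hu0 : u z = 0 := by linear_combination (1/2) * p1 + (1/2) * p2
  have hW0 : W z = 0 := by linear_combination (1/2) * p1 - (1/2) * p2
  refine ⟨hu0, ?_⟩
  rw [← norm_eq_zero]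
  have := congrArg norm hW0
  simp only [W] at this
  rw [norm_mul, hEn, Complex.norm_conj, mul_one, norm_zero] at this
  exact this


end Helpers

/-- The symmetry relations `m₁₁(z,k) = conj(m₂₂(z,k̄))` and `m₂₁(z,k) = conj(m₁₂(z,k̄))`
between the first column of `m(·,k)` and the second column of `m(·,k̄)`. -/
theorem symmetry_of_exponentially_growing_solutions
    (ε : ℝ) (hε0 : 0 < ε) (hε1 : ε < 1) (q : ℂ → ℂ)
    (hqsupp : HasCompactSupport q) (hqhold : IsHolder ε q)
    (r : ℝ) (hr : 2 < r) (k : ℂ)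
    (m11 m21 : ℂ → ℂ)
    (hm11d : Differentiable ℝ m11) (hm21d : Differentiable ℝ m21)
    (hm1 : ∀ z, wDbar m11 z = q z * m21 z)
    (hm2 : ∀ z, wD m21 z + Complex.I * k * m21 z = (starRingEnd ℂ) (q z) * m11 z)
    (hm11Lp : MemLp (fun z => m11 z - 1) (ENNReal.ofReal r))
    (hm21Lp : MemLp m21 (ENNReal.ofReal r))
    (hm11H : IsHolder ε (fun z => m11 z - 1)) (hm21H : IsHolder ε m21)
    (n12 n22 : ℂ → ℂ)
    (hn12d : Differentiable ℝ n12) (hn22d : Differentiable ℝ n22)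
    (hn1 : ∀ z, wDbar n12 z - Complex.I * (starRingEnd ℂ) k * n12 z = q z * n22 z)
    (hn2 : ∀ z, wD n22 z = (starRingEnd ℂ) (q z) * n12 z)
    (hn22Lp : MemLp (fun z => n22 z - 1) (ENNReal.ofReal r))
    (hn12Lp : MemLp n12 (ENNReal.ofReal r))
    (hn22H : IsHolder ε (fun z => n22 z - 1)) (hn12H : IsHolder ε n12) :
    ∀ z : ℂ, m11 z = (starRingEnd ℂ) (n22 z) ∧ m21 z = (starRingEnd ℂ) (n12 z) := by
  have conj0 : ∀ f : ℂ → ℂ, Filter.Tendsto f (Filter.cocompact ℂ) (nhds 0) →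
      Filter.Tendsto (fun z => (starRingEnd ℂ) (f z)) (Filter.cocompact ℂ) (nhds 0) := by
    intro f hf
    have := (Complex.continuous_conj.tendsto 0).comp hf
    rw [map_zero] at this
    exact this
  have a1 := decay _ ε r hε0 hr hm11Lp hm11H
  have a2 := decay _ ε r hε0 hr hm21Lp hm21H
  have a3 := conj0 _ (decay _ ε r hε0 hr hn22Lp hn22H)
  have a4 := conj0 _ (decay _ ε r hε0 hr hn12Lp hn12H)
  intro z
  have main := system_unique q (fun z => m11 z - (starRingEnd ℂ) (n22 z))
    (fun z => m21 z - (starRingEnd ℂ) (n12 z)) k (holder_continuous q ε hε0 hqhold) hqsupp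
    (hm11d.sub (diff_conj _ hn22d)) (hm21d.sub (diff_conj _ hn12d))
    (by
      intro z
      rw [wDbar_sub _ _ z (hm11d z) (diff_conj _ hn22d z), wDbar_conj _ z (hn22d z), hm1, hn2]
      simp only [map_mul, Complex.conj_conj]; ring)
    (by
      intro z
      have h := congrArg (starRingEnd ℂ) (hn1 z)
      simp only [map_sub, map_mul, Complex.conj_conj, Complex.conj_I] at h
      rw [wD_sub _ _ z (hm21d z) (diff_conj _ hn12d z), wD_conj _ z (hn12d z)]
      linear_combination hm2 z - h)
    (by
      have := a1.sub a3
      rw [sub_zero] at this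
      refine this.congr fun w => ?_
      simp only [map_sub, map_one]; ring)
    (by
      have := a2.sub a4
      rw [sub_zero] at this
      exact this) z
  exact ⟨sub_eq_zero.1 main.1, sub_eq_zero.1 main.2⟩
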